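/- In a DAG G, for any vertex V, the set nd(V) of non-descendants of V other than V (vertices W ≠ V such that V is not an ancestor of W) is backward-t-separated from {V} by the empty set. -/

import Mathlib

variable {V : Type*}

/-- `p` is (the list of vertices of) a directed path from `i` to `j` in the graph with
edge relation `E`: consecutive vertices are joined by edges, and the path has at least
one edge. -/
def IsDirPath (E : V → V → Prop) (p : List V) (i j : V) : Prop :=
  p.Chain' E ∧ p.head? = some i ∧ p.getLast? = some j ∧ 2 ≤ p.length

/-- The graph is acyclic: no directed cycle. -/
def Acyclic (E : V → V → Prop) : Prop := ∀ v, ¬ Relation.TransGen E v v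

/-- `v` is an ancestor of `w`: `v = w` or there is a directed path from `v` to `w`. -/
def Ancestor (E : V → V → Prop) (v w : V) : Prop := Relation.ReflTransGen E v w

/-- A forward trek from `i` to `j` is a directed path from `i` to `j`; `p` lists its vertices. -/
def IsFwdTrek (E : V → V → Prop) (p : List V) (i j : V) : Prop := IsDirPath E p i j

/-- A backward trek from `i` to `j` is a directed path from `j` to `i`, or a union of two
directed paths from a common vertex `k` (distinct from `i` and `j`) to `i` and to `j`,
disjoint except at `k`; `p` lists its vertices. -/
def IsBwdTrek (E : V → V → Prop) (p : List V) (i j : V) : Prop :=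
  IsDirPath E p j i ∨
    ∃ (k : V) (q r : List V), k ≠ i ∧ k ≠ j ∧ IsDirPath E q k i ∧ IsDirPath E r k j ∧
      (∀ x, x ∈ q → x ∈ r → x = k) ∧ p = q ++ r

/-- A proper forward trek from `X` to `Y`: a forward trek from some `i ∈ X` to some `j ∈ Y`
containing no vertex of `X ∪ Y` other than `i` and `j`. -/
def ProperFwdTrek (E : V → V → Prop) (X Y : Set V) (p : List V) : Prop :=
  ∃ i ∈ X, ∃ j ∈ Y, IsFwdTrek E p i j ∧ ∀ x ∈ p, x ∈ X ∪ Y → x = i ∨ x = j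

/-- A proper backward trek from `X` to `Y`. -/
def ProperBwdTrek (E : V → V → Prop) (X Y : Set V) (p : List V) : Prop :=
  ∃ i ∈ X, ∃ j ∈ Y, IsBwdTrek E p i j ∧ ∀ x ∈ p, x ∈ X ∪ Y → x = i ∨ x = j

/-- `X` is forward-t-separated from `Y` by `Z`: every proper forward trek from `X` to `Y`
contains a vertex of `Z`. -/
def FwdTSep (E : V → V → Prop) (X Y Z : Set V) : Prop :=
  ∀ p, ProperFwdTrek E X Y p → ∃ z ∈ Z, z ∈ p

/-- `X` is backward-t-separated from `Y` by `Z`: every proper backward trek from `X` to `Y`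
contains a vertex of `Z`. -/
def BwdTSep (E : V → V → Prop) (X Y Z : Set V) : Prop :=
  ∀ p, ProperBwdTrek E X Y p → ∃ z ∈ Z, z ∈ p

/-- `X` and `Y` are t-separated by `Z`: both forward- and backward-t-separation hold. -/
def TSep (E : V → V → Prop) (X Y Z : Set V) : Prop :=
  FwdTSep E X Y Z ∧ BwdTSep E X Y Z

theorem IsDirPath.transGen {V : Type*} {E : V → V → Prop} {p : List V} {i j : V}
    (h : IsDirPath E p i j) : Relation.TransGen E i j := by
  obtain ⟨hc, hh, hl, hlen⟩ := h
  induction p generalizing i with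
  | nil => simp at hlen
  | cons a t ih =>
    cases t with
    | nil => simp at hlen
    | cons b t =>
      have hc2 := List.isChain_cons_cons.mp hc
      simp only [List.head?_cons, Option.some.injEq] at hh
      subst hh
      cases t with
      | nil =>
        simp at hl
        subst hl
        exact Relation.TransGen.single hc2.1
      | cons c t =>
        refine Relation.TransGen.head hc2.1 (ih hc2.2 (by simp) ?_ (by simp))
        simpa using hl

/-- In a DAG, the set `nd(v)` of non-descendants of `v` (other than `v`) is
backward-t-separated from `{v}` by the empty set. -/
theorem nonDescendants_bwdTSep_empty (E : V → V → Prop) (hacyc : Acyclic E) (v : V) :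
    BwdTSep E {w | w ≠ v ∧ ¬ Ancestor E v w} {v} ∅ := by
  rintro p ⟨i, ⟨hiv, hanc⟩, j, hj, ht, hp⟩
  have hj' : j = v := hj
  subst hj'
  exfalso
  rcases ht with h | ⟨k, q, r, hki, hkj, hq, hr, -, rfl⟩
  · exact hanc h.transGen.to_reflTransGen
  · have hk : k ∈ q := List.mem_of_mem_head? hq.2.1
    have hn : ¬ Ancestor E j k := fun h =>
      hacyc j (Relation.TransGen.trans_right h hr.transGen)
    rcases hp k (List.mem_append_left _ hk) (Or.inl ⟨hkj, hn⟩) with h | h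
    · exact hki h
    · exact hkj h
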